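/- Let V be a finite-dimensional real inner product space with symmetric positive definite form a and subspaces V₀,...,V_N with V = Σᵢ Vᵢ. Suppose there is a coloring: a partition of {0,...,N} into n classes such that subspaces in the same class are mutually a-orthogonal. Then the additive Schwarz operator P = Σᵢ Pᵢ (Pᵢ the a-orthogonal projection onto Vᵢ) satisfies a(Pv, v) ≤ n a(v,v) for all v ∈ V, i.e., the largest eigenvalue of P is at most n. -/

import Mathlib

/-- Bessel's inequality for a finite family of mutually orthogonal projections. -/
theorem sum_apply_projection_le {V ι : Type*} [AddCommGroup V] [Module ℝ V]
    (a : V →ₗ[ℝ] V →ₗ[ℝ] ℝ)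
    (hsymm : ∀ u v, a u v = a v u)
    (hnonneg : ∀ v, 0 ≤ a v v)
    (W : ι → Submodule ℝ V) (p : ι → V →ₗ[ℝ] V)
    (hp_mem : ∀ i v, p i v ∈ W i)
    (hp_proj : ∀ i v, ∀ w ∈ W i, a (p i v) w = a v w)
    (s : Finset ι)
    (horth : ∀ i ∈ s, ∀ j ∈ s, i ≠ j → ∀ u ∈ W i, ∀ w ∈ W j, a u w = 0) (v : V) :
    ∑ i ∈ s, a (p i v) v ≤ a v v := by
  have hself : a (∑ i ∈ s, p i v) (∑ i ∈ s, p i v) = ∑ i ∈ s, a (p i v) v := by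
    rw [LinearMap.map_sum₂]
    refine Finset.sum_congr rfl fun i hi => ?_
    rw [map_sum, Finset.sum_eq_single_of_mem i hi fun j hj hji =>
      horth i hi j hj hji.symm _ (hp_mem i v) _ (hp_mem j v),
      hp_proj i v _ (hp_mem i v), hsymm]
  have hleft : a (∑ i ∈ s, p i v) v = ∑ i ∈ s, a (p i v) v := by
    rw [LinearMap.map_sum₂]
  have h := hnonneg (v - ∑ i ∈ s, p i v)
  rw [LinearMap.map_sub₂, map_sub, map_sub, hself,
    hsymm v (∑ i ∈ s, p i v), hleft] at h
  linarith

theorem stmt2 {V : Type*} [AddCommGroup V] [Module ℝ V] [FiniteDimensional ℝ V]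
    (a : V →ₗ[ℝ] V →ₗ[ℝ] ℝ)
    (hsymm : ∀ u v, a u v = a v u)
    (hpos : ∀ v : V, v ≠ 0 → 0 < a v v)
    (N : ℕ) (Vs : Fin (N + 1) → Submodule ℝ V)
    (hspan : (⨆ i, Vs i) = ⊤)
    (Pi : Fin (N + 1) → V →ₗ[ℝ] V)
    (hPi_mem : ∀ i v, Pi i v ∈ Vs i)
    (hPi_proj : ∀ i v, ∀ w ∈ Vs i, a (Pi i v) w = a v w)
    (P : V →ₗ[ℝ] V) (hP : P = ∑ i, Pi i)
    (n : ℕ) (c : Fin (N + 1) → Fin n)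
    (hcolor : ∀ i j, i ≠ j → c i = c j →
      ∀ u ∈ Vs i, ∀ w ∈ Vs j, a u w = 0) :
    ∀ v : V, a (P v) v ≤ (n : ℝ) * a v v := by
  intro v
  have hnonneg : ∀ w, 0 ≤ a w w := fun w => by
    obtain rfl | hw := eq_or_ne w 0
    · simp
    · exact (hpos w hw).le
  calc a (P v) v = ∑ i, a (Pi i v) v := by
        rw [hP, LinearMap.sum_apply, LinearMap.map_sum₂]
    _ = ∑ k, ∑ i with c i = k, a (Pi i v) v := (Finset.sum_fiberwise _ c _).symm
    _ ≤ ∑ _k : Fin n, a v v := Finset.sum_le_sum fun k _ =>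
        sum_apply_projection_le a hsymm hnonneg Vs Pi hPi_mem hPi_proj _
          (fun i hi j hj hij => hcolor i j hij <| by
            rw [(Finset.mem_filter.1 hi).2, (Finset.mem_filter.1 hj).2]) v
    _ = (n : ℝ) * a v v := by simp
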